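/- Domino tilings of contractible regions in ℝ³ do not have the local move property: for every n ∈ ℕ there exists a contractible region Γ ⊂ ℤ³ that has exactly two domino tilings T₁ ≠ T₂, and these two tilings differ in at least n tiles (|T₁ ∖ T₂| ≥ n); in particular T₂ cannot be obtained from T₁ by a sequence of flips each involving a bounded number of tiles. -/

import Mathlib

/-- Two cubes of `ℤ^d` are adjacent if they differ by a standard basis vector. -/
def CubeAdj {d : ℕ} (a b : Fin d → ℤ) : Prop :=
  ∃ i : Fin d, a = b + Pi.single i 1 ∨ b = a + Pi.single i 1

/-- A domino is a set of two adjacent cubes. -/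
def IsDomino {d : ℕ} (s : Set (Fin d → ℤ)) : Prop :=
  ∃ a b : Fin d → ℤ, CubeAdj a b ∧ s = {a, b}

/-- A tiling of `Γ` by tiles satisfying `P`: a partition of `Γ` into such tiles. -/
def IsTiling {α : Type*} (P : Set α → Prop) (Γ : Set α) (T : Set (Set α)) : Prop :=
  (∀ s ∈ T, P s ∧ s.Nonempty) ∧ T.PairwiseDisjoint id ∧ ⋃₀ T = Γ

/-- The closed region `Γ̄ = ⋃_{v ∈ Γ} (v + [0,1]^d) ⊂ ℝ^d` associated to `Γ ⊂ ℤ^d`. -/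
def cubeClosure {d : ℕ} (Γ : Set (Fin d → ℤ)) : Set (Fin d → ℝ) :=
  ⋃ v ∈ Γ, {x : Fin d → ℝ | ∀ i, (v i : ℝ) ≤ x i ∧ x i ≤ (v i : ℝ) + 1}

/-- A contractible region: a finite `Γ ⊂ ℤ^d` such that `Γ̄` is contractible and has
contractible interior. -/
def IsContractibleRegion {d : ℕ} (Γ : Set (Fin d → ℤ)) : Prop :=
  Γ.Finite ∧ ContractibleSpace ↥(cubeClosure Γ) ∧
    ContractibleSpace ↥(interior (cubeClosure Γ))

/-!
Extend each inner cube of a flat `(n + 3) × 3` board to a domino, its whisker, by adding the cube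
above or below it, alternately. The tip of a whisker has no other neighbour, so every tiling
contains all whiskers, and what remains to be tiled is the boundary of the board: a cycle of
`2 * n + 8` cubes. An even cycle has exactly two perfect matchings, and these share no edge. The
whiskers do not affect contractibility, since the region and its interior can be squeezed
vertically onto the board.
-/

/-! ### Tilings of whiskered cycles -/

namespace IsTiling

variable {α : Type*} {P : Set α → Prop} {Γ : Set α} {T T' : Set (Set α)}

theorem eq_of_mem_of_mem (hT : IsTiling P Γ T) {s t : Set α} (hs : s ∈ T) (ht : t ∈ T) {v : α}
    (hvs : v ∈ s) (hvt : v ∈ t) : s = t :=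
  hT.2.1.elim_set hs ht v hvs hvt

theorem subset_of_mem (hT : IsTiling P Γ T) {t : Set α} (ht : t ∈ T) : t ⊆ Γ :=
  hT.2.2 ▸ Set.subset_sUnion_of_mem ht

theorem eq_of_subset (hT : IsTiling P Γ T) (hT' : IsTiling P Γ T') (h : T ⊆ T') : T = T' := by
  refine h.antisymm fun t ht ↦ ?_
  obtain ⟨v, hv⟩ := (hT'.1 t ht).2
  obtain ⟨s, hs, hvs⟩ : v ∈ ⋃₀ T := hT.2.2 ▸ hT'.subset_of_mem ht hv
  exact hT'.eq_of_mem_of_mem (h hs) ht hvs hv ▸ hs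

theorem right_unique (hT : IsTiling P Γ T) {v w w' : α} (hw : {v, w} ∈ T) (hw' : {v, w'} ∈ T) :
    w = w' := by
  have h := hT.eq_of_mem_of_mem hw hw' (Set.mem_insert v _) (Set.mem_insert v _)
  grind [Set.pair_eq_pair_iff]

theorem left_unique (hT : IsTiling P Γ T) {v v' w : α} (hv : {v, w} ∈ T) (hv' : {v', w} ∈ T) :
    v = v' := by
  rw [Set.pair_comm] at hv hv'
  exact hT.right_unique hv hv'

end IsTiling

theorem CubeAdj.symm {d : ℕ} {v w : Fin d → ℤ} (h : CubeAdj v w) : CubeAdj w v :=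
  h.imp fun _ ↦ Or.symm

theorem IsTiling.exists_pair_mem {d : ℕ} {Γ : Set (Fin d → ℤ)} {T : Set (Set (Fin d → ℤ))}
    (hT : IsTiling IsDomino Γ T) {v : Fin d → ℤ} (hv : v ∈ Γ) :
    ∃ w ∈ Γ, CubeAdj v w ∧ {v, w} ∈ T := by
  obtain ⟨t, ht, hvt⟩ : v ∈ ⋃₀ T := hT.2.2 ▸ hv
  have htΓ := hT.subset_of_mem ht
  obtain ⟨a, b, hab, rfl⟩ := (hT.1 t ht).1
  rcases hvt with rfl | rfl
  · exact ⟨b, htΓ (by simp), hab, ht⟩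
  · exact ⟨a, htΓ (by simp), hab.symm, Set.pair_comm _ _ ▸ ht⟩

/-- The set of pairs `{x (τ i), y i}`: the tiling given by the perfect matching `τ` between the
elements `x i` and the elements `y i`. -/
def matchingTiling {α ι : Type*} (x y : ι → α) (τ : Equiv.Perm ι) : Set (Set α) :=
  Set.range fun i ↦ {x (τ i), y i}

section MatchingTiling

variable {α ι : Type*} {x y : ι → α}

theorem isTiling_matchingTiling {P : Set α → Prop} {τ : Equiv.Perm ι}
    (hxy : (Sum.elim x y).Injective) (hP : ∀ i, P {x (τ i), y i}) :
    IsTiling P (Set.range (Sum.elim x y)) (matchingTiling x y τ) := by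
  obtain ⟨hx, hy, hne⟩ := Sum.elim_injective.1 hxy
  refine ⟨?_, ?_, ?_⟩
  · rintro _ ⟨i, rfl⟩
    exact ⟨hP i, Set.insert_nonempty _ _⟩
  · rintro _ ⟨i, rfl⟩ _ ⟨j, rfl⟩ hij
    rw [Function.onFun, id, id, Set.disjoint_left]
    rintro v (rfl | rfl) (h | h)
    · exact hij (by rw [τ.injective (hx h)])
    · exact hne _ _ h
    · exact hne _ _ h.symm
    · exact hij (by rw [hy h])
  · rw [Set.Sum.elim_range, ← τ.surjective.range_comp x]
    ext v
    simp only [matchingTiling, Set.sUnion_range, Set.mem_iUnion, Set.mem_insert_iff,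
      Set.mem_singleton_iff, Set.mem_union, Set.mem_range, Function.comp_apply, exists_or, eq_comm]

theorem ncard_matchingTiling_diff (hxy : (Sum.elim x y).Injective) (τ τ' : Equiv.Perm ι) :
    (matchingTiling x y τ \ matchingTiling x y τ').ncard = {i | τ i ≠ τ' i}.ncard := by
  obtain ⟨hx, hy, hne⟩ := Sum.elim_injective.1 hxy
  have pair_eq_iff (i j : ι) :
      ({x (τ' j), y j} : Set α) = {x (τ i), y i} ↔ j = i ∧ τ' j = τ i := by
    grind [Set.pair_eq_pair_iff, Function.Injective]
  have hdiff : matchingTiling x y τ \ matchingTiling x y τ' =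
      (fun i ↦ {x (τ i), y i}) '' {i | τ i ≠ τ' i} := by
    ext t
    simp only [matchingTiling]
    grind
  rw [hdiff, Set.ncard_image_of_injective]
  intro i j hij
  grind

end MatchingTiling

/-- The cubes of `Γ` are those of a cycle, alternately of the form `a k` and `b k`, together with
dominoes `{p i, q i}` (the whiskers) whose tip `q i` has no neighbour in `Γ` other than `p i`. The
permutation `σ` goes around the cycle: the neighbours of `b k` on it are `a k` and `a (σ k)`.
Roots `p i` may touch the cycle and each other. -/
structure IsWhiskeredCycle {d : ℕ} {κ ι : Type*} (σ : Equiv.Perm κ) (a b : κ → Fin d → ℤ)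
    (p q : ι → Fin d → ℤ) (Γ : Set (Fin d → ℤ)) : Prop where
  isCycleOn : σ.IsCycleOn Set.univ
  injective : (Sum.elim (Sum.elim a p) (Sum.elim b q)).Injective
  range_eq : Set.range (Sum.elim (Sum.elim a p) (Sum.elim b q)) = Γ
  adj : ∀ k, CubeAdj (a k) (b k)
  adj_shift : ∀ k, CubeAdj (a (σ k)) (b k)
  adj_whisker : ∀ i, CubeAdj (p i) (q i)
  mem_of_adj_cycle : ∀ k, ∀ v ∈ Γ, CubeAdj (a (σ k)) v → v = b k ∨ v = b (σ k) ∨ v ∈ Set.range p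
  eq_of_adj_tip : ∀ i, ∀ v ∈ Γ, CubeAdj (q i) v → v = p i

namespace IsWhiskeredCycle

variable {d : ℕ} {κ ι : Type*} {σ : Equiv.Perm κ} {a b : κ → Fin d → ℤ} {p q : ι → Fin d → ℤ}
  {Γ : Set (Fin d → ℤ)} {T : Set (Set (Fin d → ℤ))}

variable (a b p q) in
/-- The tiling by all whiskers and the dominoes `{a (τ k), b k}` of the cycle; `τ = 1` and `τ = σ`
are the two ways of going around the cycle. -/
abbrev tiling (τ : Equiv.Perm κ) : Set (Set (Fin d → ℤ)) :=
  matchingTiling (Sum.elim a p) (Sum.elim b q) (τ.sumCongr 1)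

theorem isTiling_of_adj (h : IsWhiskeredCycle σ a b p q Γ) {τ : Equiv.Perm κ}
    (hτ : ∀ k, CubeAdj (a (τ k)) (b k)) : IsTiling IsDomino Γ (tiling a b p q τ) := by
  have hdomino (i : κ ⊕ ι) :
      IsDomino {Sum.elim a p (τ.sumCongr 1 i), Sum.elim b q i} := by
    rcases i with k | i
    exacts [⟨_, _, hτ k, rfl⟩, ⟨_, _, h.adj_whisker i, rfl⟩]
  exact h.range_eq ▸ isTiling_matchingTiling h.injective hdomino

theorem mem (h : IsWhiskeredCycle σ a b p q Γ) (i : (κ ⊕ ι) ⊕ (κ ⊕ ι)) :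
    Sum.elim (Sum.elim a p) (Sum.elim b q) i ∈ Γ :=
  h.range_eq ▸ Set.mem_range_self i

theorem whisker_mem (h : IsWhiskeredCycle σ a b p q Γ) (hT : IsTiling IsDomino Γ T) (i : ι) :
    {p i, q i} ∈ T := by
  obtain ⟨v, hv, hadj, hvT⟩ := hT.exists_pair_mem (h.mem (.inr (.inr i)))
  obtain rfl := h.eq_of_adj_tip i v hv hadj
  exact Set.pair_comm _ _ ▸ hvT

theorem pair_mem_or_pair_mem (h : IsWhiskeredCycle σ a b p q Γ) (hT : IsTiling IsDomino Γ T)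
    (k : κ) : {a (σ k), b k} ∈ T ∨ {a (σ k), b (σ k)} ∈ T := by
  obtain ⟨v, hv, hadj, hvT⟩ := hT.exists_pair_mem (h.mem (.inl (.inl (σ k))))
  rcases h.mem_of_adj_cycle k v hv hadj with rfl | rfl | ⟨i, rfl⟩
  · exact .inl hvT
  · exact .inr hvT
  · have hq : a (σ k) = q i :=
      hT.left_unique hvT (Set.pair_comm _ _ ▸ h.whisker_mem hT i)
    exact absurd (@h.injective (.inl (.inl _)) (.inr (.inr i)) hq) nofun

theorem forall_pair_mem [Finite κ] [Nontrivial κ] (h : IsWhiskeredCycle σ a b p q Γ)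
    (hT : IsTiling IsDomino Γ T) {k : κ} (hk : {a k, b k} ∈ T) (l : κ) : {a l, b l} ∈ T := by
  have step {j : κ} (hj : {a j, b j} ∈ T) : {a (σ j), b (σ j)} ∈ T := by
    refine (h.pair_mem_or_pair_mem hT j).resolve_left fun hj' ↦ ?_
    have hfix : σ j = j := by
      simpa using @h.injective (.inl (.inl _)) (.inl (.inl _)) (hT.left_unique hj' hj)
    exact h.isCycleOn.apply_ne Set.nontrivial_univ (Set.mem_univ j) hfix
  obtain ⟨m, -, rfl⟩ := (h.isCycleOn.2 (Set.mem_univ k) (Set.mem_univ l)).exists_pow_eq'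
  induction m with
  | zero => exact hk
  | succ m ih => simpa only [pow_succ', Equiv.Perm.mul_apply] using step ih

theorem eq_tiling_of_forall_mem (h : IsWhiskeredCycle σ a b p q Γ) (hT : IsTiling IsDomino Γ T)
    {τ : Equiv.Perm κ} (hτ : ∀ k, CubeAdj (a (τ k)) (b k)) (hmem : ∀ k, {a (τ k), b k} ∈ T) :
    T = tiling a b p q τ := by
  refine ((h.isTiling_of_adj hτ).eq_of_subset hT ?_).symm
  rintro _ ⟨k | i, rfl⟩
  exacts [hmem k, h.whisker_mem hT i]

theorem eq_or_eq [Finite κ] [Nontrivial κ] (h : IsWhiskeredCycle σ a b p q Γ)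
    (hT : IsTiling IsDomino Γ T) : T = tiling a b p q 1 ∨ T = tiling a b p q σ := by
  by_cases hk : ∃ k, {a k, b k} ∈ T
  · obtain ⟨k, hk⟩ := hk
    exact .inl (h.eq_tiling_of_forall_mem hT h.adj (h.forall_pair_mem hT hk))
  · exact .inr (h.eq_tiling_of_forall_mem hT h.adj_shift fun k ↦
      (h.pair_mem_or_pair_mem hT k).resolve_right fun hk' ↦ hk ⟨_, hk'⟩)

theorem ncard_diff [Nontrivial κ] (h : IsWhiskeredCycle σ a b p q Γ) :
    (tiling a b p q 1 \ tiling a b p q σ).ncard = Nat.card κ := by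
  have hmoved : {i | (Equiv.Perm.sumCongr 1 1 : Equiv.Perm (κ ⊕ ι)) i ≠ σ.sumCongr 1 i} =
      Set.range Sum.inl := by
    ext (k | i)
    · simpa using (h.isCycleOn.apply_ne Set.nontrivial_univ (Set.mem_univ k)).symm
    · simp
  rw [ncard_matchingTiling_diff h.injective, hmoved, ← Set.image_univ,
    Set.ncard_image_of_injective _ Sum.inl_injective, Set.ncard_univ]

end IsWhiskeredCycle

/-! ### Contractibility of unions of columns -/

open Function

theorem contractibleSpace_of_segment_subset {E : Type*} [AddCommGroup E] [Module ℝ E]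
    [TopologicalSpace E] [IsTopologicalAddGroup E] [ContinuousSMul ℝ E] {S K : Set E}
    (hK : Convex ℝ K) (hne : K.Nonempty) (hKS : K ⊆ S) {f : E → E} (hf : ContinuousOn f S)
    (hfK : Set.MapsTo f S K) (hseg : ∀ x ∈ S, segment ℝ x (f x) ⊆ S) : ContractibleSpace S := by
  have := hK.contractibleSpace hne
  let toK : C(S, K) := ⟨hfK.restrict f S K, hf.mapsToRestrict hfK⟩
  let incl : C(K, S) := ⟨Set.inclusion hKS, continuous_inclusion hKS⟩
  have hnull : (incl.comp toK).Nullhomotopic := by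
    simpa using ((id_nullhomotopic K).comp_right incl).comp_left toK
  have hf' : Continuous fun z : unitInterval × S ↦ f z.2 :=
    (continuousOn_iff_continuous_domRestrict.1 hf).comp continuous_snd
  let slide : (ContinuousMap.id S).Homotopy (incl.comp toK) :=
    { toFun := fun z ↦ ⟨AffineMap.lineMap (z.2 : E) (f z.2) (z.1 : ℝ), hseg z.2 z.2.2
        (segment_eq_image_lineMap ℝ (z.2 : E) (f z.2) ▸ Set.mem_image_of_mem _ z.1.2)⟩
      continuous_toFun := by
        refine .subtype_mk ?_ _
        simp only [AffineMap.lineMap_apply, vsub_eq_sub, vadd_eq_add]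
        have hval : Continuous fun z : unitInterval × S ↦ (z.2 : E) := by fun_prop
        exact ((continuous_subtype_val.comp continuous_fst).smul (hf'.sub hval)).add hval
      map_zero_left := fun x ↦ by simp
      map_one_left := fun x ↦ by simp [incl, toK] }
  obtain ⟨y, hy⟩ := hnull
  exact (contractible_iff_id_nullhomotopic S).2 ⟨y, .trans ⟨slide⟩ hy⟩

theorem segment_update_subset_interior {ι : Type*} [DecidableEq ι] {S : Set (ι → ℝ)} {i : ι}
    {c : ℝ} (hS : ∀ x ∈ S, segment ℝ x (update x i c) ⊆ S) {x : ι → ℝ} (hx : x ∈ interior S)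
    (hxc : update x i c ∈ interior S) : segment ℝ x (update x i c) ⊆ interior S := by
  have segment_eq (y : ι → ℝ) : segment ℝ y (update y i c) =
      (fun r ↦ update y i (AffineMap.lineMap c (y i) r)) '' Set.Icc (0 : ℝ) 1 := by
    rw [← Set.image_image (update y i), ← segment_eq_image_lineMap, Pi.image_update_segment,
      update_eq_self, segment_symm]
  rw [segment_eq]
  rintro _ ⟨r, hr, rfl⟩
  rcases eq_or_ne r 0 with rfl | hr0
  · simpa using hxc
  -- Near the given point, undoing the contraction by the factor `r` lands in `S`.
  let stretch (y : ι → ℝ) : ι → ℝ := update y i (AffineMap.lineMap c (y i) r⁻¹)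
  have hcont : Continuous stretch := by
    simp only [stretch, AffineMap.lineMap_apply_ring']
    fun_prop
  have hstretch : stretch (update x i (AffineMap.lineMap c (x i) r)) = x := by
    simp [stretch, AffineMap.lineMap_apply_ring', hr0]
  have hev := hcont.continuousAt.preimage_mem_nhds (hstretch.symm ▸ mem_interior_iff_mem_nhds.1 hx)
  refine mem_interior_iff_mem_nhds.2 (Filter.mem_of_superset hev fun y hy ↦ hS _ hy ?_)
  rw [segment_eq]
  exact ⟨r, hr, by simp [stretch, AffineMap.lineMap_apply_ring', hr0]⟩

theorem mem_cubeClosure {d : ℕ} {Γ : Set (Fin d → ℤ)} {x : Fin d → ℝ} :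
    x ∈ cubeClosure Γ ↔ ∃ v ∈ Γ, ∀ i, (v i : ℝ) ≤ x i ∧ x i ≤ v i + 1 := by
  simp [cubeClosure]

theorem exists_int_mem_Icc_of_le_of_le {a b : ℤ} (hab : a ≤ b) {x : ℝ} (hax : a ≤ x)
    (hxb : x ≤ b + 1) : ∃ m ∈ Set.Icc a b, (m : ℝ) ≤ x ∧ x ≤ m + 1 := by
  rcases hxb.lt_or_eq with hlt | rfl
  · exact ⟨⌊x⌋, ⟨Int.le_floor.2 hax, Int.lt_add_one_iff.1 (Int.floor_lt.2 (mod_cast hlt))⟩,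
      Int.floor_le x, (Int.lt_floor_add_one x).le⟩
  · exact ⟨b, ⟨hab, le_rfl⟩, by simp⟩

theorem cubeClosure_mono {d : ℕ} {Γ Γ' : Set (Fin d → ℤ)} (h : Γ ⊆ Γ') :
    cubeClosure Γ ⊆ cubeClosure Γ' :=
  Set.biUnion_subset_biUnion_left h

theorem cubeClosure_subset_pi {d : ℕ} {Γ : Set (Fin d → ℤ)} {s : Set (Fin d)} {l u : Fin d → ℤ}
    (h : Γ ⊆ s.pi fun j ↦ Set.Icc (l j) (u j)) :
    cubeClosure Γ ⊆ s.pi fun j ↦ Set.Icc (l j : ℝ) (u j + 1) := by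
  intro x hx j hj
  obtain ⟨v, hv, hvx⟩ := mem_cubeClosure.1 hx
  have hlv : (l j : ℝ) ≤ v j := mod_cast (h hv j hj).1
  have hvu : (v j : ℝ) ≤ u j := mod_cast (h hv j hj).2
  constructor <;> linarith [hvx j]

theorem pi_subset_cubeClosure_Icc {d : ℕ} {l u : Fin d → ℤ} (hlu : l ≤ u) :
    (Set.univ.pi fun j ↦ Set.Icc (l j : ℝ) (u j + 1)) ⊆ cubeClosure (Set.Icc l u) := by
  intro x hx
  choose v hv hvx using fun j ↦
    exists_int_mem_Icc_of_le_of_le (hlu j) (hx j trivial).1 (hx j trivial).2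
  exact mem_cubeClosure.2 ⟨v, ⟨fun j ↦ (hv j).1, fun j ↦ (hv j).2⟩, hvx⟩

theorem segment_update_subset_cubeClosure {d : ℕ} {Γ : Set (Fin d → ℤ)} {i : Fin d} {h : ℤ}
    {c : ℝ} (hc : c ∈ Set.Icc (h : ℝ) (h + 1))
    (hΓ : ∀ v ∈ Γ, ∀ m ∈ Set.uIcc (v i) h, update v i m ∈ Γ) {x : Fin d → ℝ}
    (hx : x ∈ cubeClosure Γ) : segment ℝ x (update x i c) ⊆ cubeClosure Γ := by
  obtain ⟨v, hv, hvx⟩ := mem_cubeClosure.1 hx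
  nth_rw 1 [← update_eq_self i x]
  rw [← Pi.image_update_segment, segment_eq_uIcc]
  rintro _ ⟨z, hz, rfl⟩
  have hcell : Set.uIcc (x i) c ⊆ Set.Icc (((v i ⊓ h : ℤ) : ℝ)) ((v i ⊔ h : ℤ) + 1) := by
    push_cast
    refine Set.uIcc_subset_Icc ⟨inf_le_left.trans (hvx i).1, (hvx i).2.trans ?_⟩
      ⟨inf_le_right.trans hc.1, hc.2.trans ?_⟩ <;> gcongr
    exacts [le_sup_left, le_sup_right]
  obtain ⟨m, hm, hmz⟩ := exists_int_mem_Icc_of_le_of_le inf_le_sup (hcell hz).1 (hcell hz).2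
  refine mem_cubeClosure.2 ⟨update v i m, hΓ v hv m hm, fun j ↦ ?_⟩
  rcases eq_or_ne j i with rfl | hj
  · simpa using hmz
  · simpa [hj] using hvx j

theorem isContractibleRegion_of_columns {d : ℕ} {Γ : Set (Fin d → ℤ)} {l u : Fin d → ℤ}
    (i : Fin d) (hfin : Γ.Finite) (hlu : l ≤ u) (hbase : Set.Icc l u ⊆ Γ)
    (hΓ : ∀ v ∈ Γ, ∀ m ∈ Set.uIcc (v i) (l i), update v i m ∈ Γ)
    (hcyl : Γ ⊆ Set.pi (Set.univ \ {i}) fun j ↦ Set.Icc (l j) (u j)) :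
    IsContractibleRegion Γ := by
  set K : Set (Fin d → ℝ) := Set.univ.pi fun j ↦ Set.Icc (l j : ℝ) (u j + 1)
  have hinterior (s : Set (Fin d)) : interior (s.pi fun j ↦ Set.Icc (l j : ℝ) (u j + 1)) =
      s.pi fun j ↦ Set.Ioo (l j : ℝ) (u j + 1) := by
    simp only [interior_pi_set s.toFinite, interior_Icc]
  have hlu' (j) : (l j : ℝ) ≤ u j := mod_cast hlu j
  have hK : Convex ℝ K := convex_pi fun j _ ↦ convex_Icc _ _
  have hne : (interior K).Nonempty :=
    hinterior _ ▸ ⟨fun j ↦ l j + 2⁻¹, fun j _ ↦ by constructor <;> linarith [hlu' j]⟩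
  have hKS : K ⊆ cubeClosure Γ := (pi_subset_cubeClosure_Icc hlu).trans (cubeClosure_mono hbase)
  set c : ℝ := l i + 2⁻¹
  have hc : c ∈ Set.Ioo (l i : ℝ) (l i + 1) := by constructor <;> simp only [c] <;> linarith
  have hcK : c ∈ Set.Ioo (l i : ℝ) (u i + 1) := ⟨hc.1, by linarith [hc.2, hlu' i]⟩
  have hseg x (hx : x ∈ cubeClosure Γ) : segment ℝ x (update x i c) ⊆ cubeClosure Γ :=
    segment_update_subset_cubeClosure (Set.Ioo_subset_Icc_self hc) hΓ hx
  have hmaps : Set.MapsTo (update · i c) (cubeClosure Γ) K := fun x hx ↦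
    Set.update_mem_pi_iff.2 ⟨cubeClosure_subset_pi hcyl hx, fun _ ↦ Set.Ioo_subset_Icc_self hcK⟩
  have hmaps' : Set.MapsTo (update · i c) (interior (cubeClosure Γ)) (interior K) := by
    intro x hx
    rw [hinterior]
    exact Set.update_mem_pi_iff.2
      ⟨hinterior _ ▸ interior_mono (cubeClosure_subset_pi hcyl) hx, fun _ ↦ hcK⟩
  have hcont : Continuous fun x : Fin d → ℝ ↦ update x i c := by fun_prop
  exact ⟨hfin,
    contractibleSpace_of_segment_subset hK (hne.mono interior_subset) hKS hcont.continuousOn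
      hmaps hseg,
    contractibleSpace_of_segment_subset hK.interior hne (interior_mono hKS) hcont.continuousOn
      hmaps' fun x hx ↦ segment_update_subset_interior hseg hx (interior_mono hKS (hmaps' hx))⟩

/-! ### The whiskered board -/

theorem eq_iff_fin_three {α : Type*} {v w : Fin 3 → α} :
    v = w ↔ v 0 = w 0 ∧ v 1 = w 1 ∧ v 2 = w 2 := by
  simp only [funext_iff, Fin.forall_fin_succ, Fin.forall_fin_zero, and_true]
  rfl

theorem cubeAdj_iff_fin_three {v w : Fin 3 → ℤ} :
    CubeAdj v w ↔ (v 0 - w 0).natAbs + (v 1 - w 1).natAbs + (v 2 - w 2).natAbs = 1 := by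
  simp only [CubeAdj, Fin.exists_fin_succ, eq_iff_fin_three, Pi.add_apply, Pi.single_apply,
    ↓reduceIte, one_ne_zero, add_zero, Fin.reduceEq, Fin.succ_zero_eq_one, zero_ne_one,
    Fin.succ_one_eq_two, IsEmpty.exists_iff, or_false]
  omega

theorem isCycleOn_finRotate (n : ℕ) : (finRotate (n + 2)).IsCycleOn Set.univ := by
  have h : {i | finRotate (n + 2) i ≠ i} = Set.univ := by
    rw [← Equiv.Perm.coe_support_eq_set_support, support_finRotate, Finset.coe_univ]
  exact h ▸ isCycle_finRotate.isCycleOn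

namespace WhiskeredBoard

/-- A flat board of `(n + 3) × 3` cubes in the plane of height `0`. -/
def board (n : ℕ) : Set (Fin 3 → ℤ) :=
  Set.Icc ![0, -1, 0] ![n + 2, 1, 0]

/-- The cubes `ring n r`, `r < 2 * n + 8`, go around the boundary of the board once, starting
from the midpoint of its left side. -/
def ring (n r : ℕ) : Fin 3 → ℤ :=
  ![if r = 0 then 0 else if r ≤ n + 3 then r - 1 else if r = n + 4 then n + 2 else 2 * n + 7 - r,
    if r = 0 ∨ r = n + 4 then 0 else if r ≤ n + 3 then 1 else -1, 0]

/-- The inner cubes of the board, to which the whiskers are attached. -/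
def root {n : ℕ} (i : Fin (n + 1)) : Fin 3 → ℤ := ![i + 1, 0, 0]

/-- The tip of the whisker at `root i`. Whiskers point alternately up and down, so that no two
tips are adjacent. -/
def tip {n : ℕ} (i : Fin (n + 1)) : Fin 3 → ℤ := ![i + 1, 0, 1 - 2 * (i % 2)]

/-- The region without the local move property: the board together with the tips of the
whiskers. -/
def region (n : ℕ) : Set (Fin 3 → ℤ) :=
  board n ∪ Set.range (tip (n := n))

section Cubes

variable {n r s : ℕ} {v : Fin 3 → ℤ} {i j : Fin (n + 1)}

theorem mem_board_iff : v ∈ board n ↔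
    (0 ≤ v 0 ∧ v 0 ≤ n + 2) ∧ (-1 ≤ v 1 ∧ v 1 ≤ 1) ∧ v 2 = 0 := by
  simp only [board, Set.mem_Icc, Pi.le_def, Fin.forall_fin_succ, Matrix.cons_val_zero,
    Matrix.cons_val_succ, Fin.succ_zero_eq_one, Matrix.cons_val_fin_one, Fin.succ_one_eq_two,
    IsEmpty.forall_iff, and_true]
  omega

theorem ring_mem_board (hr : r < 2 * n + 8) : ring n r ∈ board n := by
  simp only [mem_board_iff, ring, Matrix.cons_val, and_true]
  omega

theorem root_mem_board (i : Fin (n + 1)) : root i ∈ board n := by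
  simp only [mem_board_iff, root, Matrix.cons_val, and_true]
  omega

theorem tip_notMem_board (i : Fin (n + 1)) : tip i ∉ board n := by
  simp only [mem_board_iff, tip, Matrix.cons_val]
  omega

theorem ring_injOn (n : ℕ) : Set.InjOn (ring n) (Set.Iio (2 * n + 8)) := by
  intro r hr s hs h
  simp only [eq_iff_fin_three, ring, Matrix.cons_val, Set.mem_Iio] at h hr hs
  omega

theorem root_injective (n : ℕ) : (root (n := n)).Injective := by
  intro i j h
  simp only [eq_iff_fin_three, root, Matrix.cons_val] at h
  omega

theorem tip_injective (n : ℕ) : (tip (n := n)).Injective := by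
  intro i j h
  simp only [eq_iff_fin_three, tip, Matrix.cons_val] at h
  omega

theorem ring_ne_root (r : ℕ) (i : Fin (n + 1)) : ring n r ≠ root i := by
  intro h
  simp only [eq_iff_fin_three, ring, root, Matrix.cons_val] at h
  omega

theorem exists_ring_eq_or_exists_root_eq (hv : v ∈ board n) :
    (∃ r < 2 * n + 8, ring n r = v) ∨ ∃ i : Fin (n + 1), root i = v := by
  rw [mem_board_iff] at hv
  simp only [eq_iff_fin_three, ring, root, Matrix.cons_val]
  obtain hy | hy | hy : v 1 = 1 ∨ v 1 = -1 ∨ v 1 = 0 := by omega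
  · exact .inl ⟨(v 0 + 1).toNat, by omega, by omega⟩
  · exact .inl ⟨(2 * n + 7 - v 0).toNat, by omega, by omega⟩
  obtain hx | hx | hx : v 0 = 0 ∨ v 0 = n + 2 ∨ (1 ≤ v 0 ∧ v 0 ≤ n + 1) := by omega
  · exact .inl ⟨0, by omega, by omega⟩
  · exact .inl ⟨n + 4, by omega, by omega⟩
  · exact .inr ⟨⟨(v 0 - 1).toNat, by omega⟩, by dsimp only; omega⟩

theorem cubeAdj_ring_succ (hr : r + 1 < 2 * n + 8) : CubeAdj (ring n r) (ring n (r + 1)) := by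
  simp only [cubeAdj_iff_fin_three, ring, Matrix.cons_val]
  omega

theorem cubeAdj_ring_last (n : ℕ) : CubeAdj (ring n 0) (ring n (2 * n + 7)) := by
  simp only [cubeAdj_iff_fin_three, ring, Matrix.cons_val, if_true, true_or]
  omega

theorem eq_of_cubeAdj_ring (hr : r < 2 * n + 8) (hs : s < 2 * n + 8)
    (h : CubeAdj (ring n r) (ring n s)) :
    s = r + 1 ∨ r = s + 1 ∨ (r = 0 ∧ s = 2 * n + 7) ∨ (s = 0 ∧ r = 2 * n + 7) := by
  simp only [cubeAdj_iff_fin_three, ring, Matrix.cons_val] at h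
  omega

theorem cubeAdj_root_tip (i : Fin (n + 1)) : CubeAdj (root i) (tip i) := by
  simp only [cubeAdj_iff_fin_three, root, tip, Matrix.cons_val]
  omega

theorem eq_root_of_cubeAdj_tip (hv : v ∈ region n) (h : CubeAdj (tip i) v) : v = root i := by
  rw [cubeAdj_iff_fin_three] at h
  rcases hv with hv | ⟨j, rfl⟩
  · rw [mem_board_iff] at hv
    simp only [tip, root, eq_iff_fin_three, Matrix.cons_val] at h ⊢
    omega
  · simp only [tip, Matrix.cons_val] at h
    omega

theorem update_tip_zero (i : Fin (n + 1)) : update (tip i) 2 0 = root i := by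
  simp [eq_iff_fin_three, tip, root]

end Cubes

theorem injective_cubes (n : ℕ) :
    (Sum.elim (Sum.elim (fun k : Fin (n + 4) ↦ ring n (2 * k)) (root (n := n)))
      (Sum.elim (fun k : Fin (n + 4) ↦ ring n (2 * k + 1)) (tip (n := n)))).Injective := by
  have ring_inj {r s : ℕ} (h : ring n r = ring n s) (hr : r < 2 * n + 8) (hs : s < 2 * n + 8) :
      r = s := ring_injOn n hr hs h
  have ne_tip {v : Fin 3 → ℤ} (hv : v ∈ board n) (i) : v ≠ tip i :=
    fun h ↦ tip_notMem_board i (h ▸ hv)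
  refine .sumElim (.sumElim (fun k l h ↦ ?_) (root_injective n) fun k i ↦ ring_ne_root _ i)
    (.sumElim (fun k l h ↦ ?_) (tip_injective n) fun k i ↦ ne_tip (ring_mem_board ?_) i) ?_
  · have := ring_inj h
    omega
  · have := ring_inj h
    omega
  · omega
  · rintro (k | i) (l | j)
    · intro h
      have := ring_inj h
      omega
    · exact ne_tip (ring_mem_board (by omega)) j
    · exact (ring_ne_root _ i).symm
    · exact ne_tip (root_mem_board i) j

theorem range_cubes (n : ℕ) :
    Set.range (Sum.elim (Sum.elim (fun k : Fin (n + 4) ↦ ring n (2 * k)) (root (n := n)))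
      (Sum.elim (fun k : Fin (n + 4) ↦ ring n (2 * k + 1)) (tip (n := n)))) = region n := by
  apply Set.Subset.antisymm
  · rintro _ ⟨(k | i) | (k | i), rfl⟩
    exacts [.inl (ring_mem_board (by omega)), .inl (root_mem_board i),
      .inl (ring_mem_board (by omega)), .inr ⟨i, rfl⟩]
  · rintro v (hv | ⟨i, rfl⟩)
    · obtain ⟨r, hr, rfl⟩ | ⟨i, rfl⟩ := exists_ring_eq_or_exists_root_eq hv
      · obtain ⟨k, rfl | rfl⟩ := r.even_or_odd'
        exacts [⟨.inl (.inl ⟨k, by omega⟩), rfl⟩, ⟨.inr (.inl ⟨k, by omega⟩), rfl⟩]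
      · exact ⟨.inl (.inr i), rfl⟩
    · exact ⟨.inr (.inr i), rfl⟩

theorem isWhiskeredCycle (n : ℕ) :
    IsWhiskeredCycle (finRotate (n + 4)) (fun k ↦ ring n (2 * k)) (fun k ↦ ring n (2 * k + 1))
      (root (n := n)) tip (region n) := by
  have coe_rotate (k : Fin (n + 4)) : ((finRotate (n + 4) k : ℕ) = k + 1 ∧ k + 1 < n + 4) ∨
      ((finRotate (n + 4) k : ℕ) = 0 ∧ (k : ℕ) = n + 3) := by
    grind [coe_finRotate]
  refine ⟨isCycleOn_finRotate _, injective_cubes n, range_cubes n,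
    fun k ↦ cubeAdj_ring_succ (by omega), fun k ↦ ?_, cubeAdj_root_tip, fun k v hv h ↦ ?_,
    fun i v ↦ eq_root_of_cubeAdj_tip⟩
  · rcases coe_rotate k with ⟨hk, _⟩ | ⟨hk, hlast⟩
    · rw [hk]
      exact (cubeAdj_ring_succ (r := 2 * k + 1) (by omega)).symm
    · rw [hk, hlast]
      exact cubeAdj_ring_last n
  · rcases hv with hv | ⟨i, rfl⟩
    · obtain ⟨r, hr, rfl⟩ | ⟨i, rfl⟩ := exists_ring_eq_or_exists_root_eq hv
      · have hr' : r = 2 * k + 1 ∨ r = 2 * finRotate (n + 4) k + 1 := by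
          have := eq_of_cubeAdj_ring (by omega) hr h
          have := coe_rotate k
          omega
        exact hr'.imp (congrArg _) fun h ↦ .inl (congrArg _ h)
      · exact .inr (.inr ⟨i, rfl⟩)
    · exact absurd (eq_root_of_cubeAdj_tip (.inl (ring_mem_board (by omega))) h.symm)
        (ring_ne_root _ i)

theorem isContractibleRegion (n : ℕ) : IsContractibleRegion (region n) := by
  refine isContractibleRegion_of_columns (l := ![0, -1, 0]) (u := ![n + 2, 1, 0]) 2
    ((Set.finite_Icc _ _).union (Set.finite_range _)) ?_ Set.subset_union_left ?_ ?_
  · exact (root_mem_board (0 : Fin (n + 1))).1.trans (root_mem_board 0).2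
  · rintro v (hv | ⟨i, rfl⟩) m hm
    · have hv2 : v 2 = 0 := (mem_board_iff.1 hv).2.2
      obtain rfl : m = v 2 := by
        simpa [hv2] using hm
      exact .inl ((update_eq_self (2 : Fin 3) v).symm ▸ hv)
    · obtain rfl | rfl : m = 0 ∨ m = tip i 2 := by
        simp only [tip, Matrix.cons_val, Set.mem_uIcc] at hm ⊢
        omega
      · exact .inl (update_tip_zero i ▸ root_mem_board i)
      · exact .inr ⟨i, (update_eq_self _ _).symm⟩
  · rintro v (hv | ⟨i, rfl⟩) j ⟨-, hj⟩
    · exact ⟨hv.1 j, hv.2 j⟩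
    · rw [← update_of_ne hj 0 (tip i), update_tip_zero]
      exact ⟨(root_mem_board i).1 j, (root_mem_board i).2 j⟩

end WhiskeredBoard

/-- Domino tilings of contractible regions in `ℝ³` do not have the local move
property: for every `n` there is a contractible region with exactly two domino
tilings, and these differ in at least `n` tiles. -/
theorem domino_no_local_move_property :
    ∀ n : ℕ, ∃ Γ : Set (Fin 3 → ℤ), IsContractibleRegion Γ ∧
      ∃ T₁ T₂ : Set (Set (Fin 3 → ℤ)), T₁ ≠ T₂ ∧
        IsTiling IsDomino Γ T₁ ∧ IsTiling IsDomino Γ T₂ ∧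
        (∀ T, IsTiling IsDomino Γ T → T = T₁ ∨ T = T₂) ∧
        n ≤ (T₁ \ T₂).ncard := by
  intro n
  have hcycle := WhiskeredBoard.isWhiskeredCycle n
  have hcard := hcycle.ncard_diff
  rw [Nat.card_fin] at hcard
  refine ⟨WhiskeredBoard.region n, WhiskeredBoard.isContractibleRegion n, _, _, fun heq ↦ ?_,
    hcycle.isTiling_of_adj hcycle.adj, hcycle.isTiling_of_adj hcycle.adj_shift,
    fun T hT ↦ hcycle.eq_or_eq hT, ?_⟩
  · rw [heq, Set.sdiff_self, Set.ncard_empty] at hcard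
    omega
  · omega
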